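/- Let (S,m) be a Noetherian local ring containing a field of characteristic p > 0, let J be an m-primary ideal, and let N be a finitely generated S-module. Then there exist positive constants C_1 and C_2 such that for all n ∈ ℕ: λ_S(N/J^{[p^n]}N) ≤ C_1 (p^n)^{dim N} and λ_S(Tor_1^S(N, S/J^{[p^n]})) ≤ C_2 (p^n)^{dim N}, where λ_S denotes length of an S-module and dim N is the Krull dimension of N. -/

import Mathlib

open CategoryTheory

noncomputable section

/-- The Frobenius bracket power `I^{[q]}` of an ideal. -/
def bracketPow {R : Type*} [CommSemiring R] (I : Ideal R) (q : ℕ) : Ideal R :=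
  Ideal.span ((fun x : R => x ^ q) '' (I : Set R))

/-- The length of a module, as the Krull dimension of its lattice of submodules. -/
def moduleLength (R M : Type*) [CommRing R] [AddCommGroup M] [Module R M] : WithBot ℕ∞ :=
  Order.krullDim (Submodule R M)


namespace FrobGrowth

universe u

section generic

variable {S : Type*} [CommRing S]

/-- If `α` is onto and elements killed by `β` land in `T₀`, then
`length T ≤ length T₀ + length C`. -/
lemma length_le_add {Z T C : Type*} [AddCommGroup Z] [AddCommGroup T] [AddCommGroup C]
    [Module S Z] [Module S T] [Module S C] (α : Z →ₗ[S] T) (hα : Function.Surjective α)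
    (β : Z →ₗ[S] C) (T₀ : Submodule S T) (h : ∀ z, β z = 0 → α z ∈ T₀) :
    Module.length S T ≤ Module.length S T₀ + Module.length S C := by
  rw [Module.length_eq_add_of_exact T₀.subtype T₀.mkQ (Submodule.subtype_injective _)
    (Submodule.mkQ_surjective _) (LinearMap.exact_subtype_mkQ T₀)]
  gcongr
  have h1 : Module.length S (T ⧸ T₀) ≤ Module.length S (Z ⧸ LinearMap.ker β) := by
    refine Module.length_le_of_surjective
      ((LinearMap.ker β).liftQ (T₀.mkQ.comp α) ?_) ?_
    · intro z hz
      simpa using h z (by simpa using hz)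
    · rw [← LinearMap.range_eq_top, Submodule.range_liftQ, LinearMap.range_eq_top]
      exact (Submodule.mkQ_surjective _).comp hα
  refine h1.trans ?_
  refine Module.length_le_of_injective ((LinearMap.ker β).liftQ β le_rfl) ?_
  rw [← LinearMap.ker_eq_bot]
  exact Submodule.ker_liftQ_eq_bot _ _ _ le_rfl

lemma length_range_le {Z T : Type*} [AddCommGroup Z] [AddCommGroup T]
    [Module S Z] [Module S T] (α : Z →ₗ[S] T) (B : Submodule S Z) (h : ∀ b ∈ B, α b = 0) :
    Module.length S (LinearMap.range α) ≤ Module.length S (Z ⧸ B) := by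
  refine Module.length_le_of_surjective (B.liftQ α.rangeRestrict ?_) ?_
  · intro b hb
    rw [LinearMap.mem_ker]
    ext
    simpa using h b hb
  · rw [← LinearMap.range_eq_top, Submodule.range_liftQ, LinearMap.range_eq_top]
    exact α.surjective_rangeRestrict

lemma length_quot_le_of_map {Z T : Type*} [AddCommGroup Z] [AddCommGroup T]
    [Module S Z] [Module S T] (α : Z →ₗ[S] T) (B : Submodule S Z) (h : ∀ z, α z = 0 → z ∈ B) :
    Module.length S (Z ⧸ B) ≤ Module.length S T := by
  have := length_le_add B.mkQ B.mkQ_surjective α ⊥ (by intro z hz; simpa using h z hz)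
  simpa using this

end generic

section koszul

variable {S : Type*} [CommRing S] {N : Type*} [AddCommGroup N] [Module S N]
variable {ι : Type*} [Fintype ι] 

/-- The first Koszul differential. -/
def kD (N : Type*) [AddCommGroup N] [Module S N] (f : ι → S) : (ι → N) →ₗ[S] N :=
  ∑ i, f i • LinearMap.proj i

@[simp] lemma kD_apply (f : ι → S) (n : ι → N) : kD N f n = ∑ i, f i • n i := by
  simp [kD]

/-- The second Koszul differential (on all, not only alternating, families). -/
def kE (N : Type*) [AddCommGroup N] [Module S N] (f : ι → S) : (ι → ι → N) →ₗ[S] (ι → N) where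
  toFun w i := ∑ k, f k • (w i k - w k i)
  map_add' v w := by
    ext i
    simp only [Pi.add_apply, ← Finset.sum_add_distrib, ← smul_add]
    refine Finset.sum_congr rfl fun k _ => ?_
    congr 1
    abel
  map_smul' c w := by
    ext i
    simp only [Pi.smul_apply, RingHom.id_apply, Finset.smul_sum, ← smul_sub]
    refine Finset.sum_congr rfl fun k _ => ?_
    rw [smul_comm]

lemma kE_apply (f : ι → S) (w : ι → ι → N) (i : ι) :
    kE N f w i = ∑ k, f k • (w i k - w k i) := rfl

/-- Koszul boundaries inside Koszul cycles. -/
abbrev kB (N : Type*) [AddCommGroup N] [Module S N] (f : ι → S) :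
    Submodule S (LinearMap.ker (kD N f)) :=
  (LinearMap.range (kE N f)).comap (LinearMap.ker (kD N f)).subtype

/-- Koszul `H₁`. -/
abbrev kH1 (N : Type*) [AddCommGroup N] [Module S N] (f : ι → S) : Type _ :=
  LinearMap.ker (kD N f) ⧸ kB N f

/-- Koszul `H₀`. -/
abbrev kH0 (N : Type*) [AddCommGroup N] [Module S N] (f : ι → S) : Type _ :=
  N ⧸ LinearMap.range (kD N f)

variable [DecidableEq ι]

lemma smul_mem_range_kD (f : ι → S) (i : ι) (n : N) : f i • n ∈ LinearMap.range (kD N f) :=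
  ⟨Pi.single i n, by simp [Pi.single_apply]⟩

lemma h0_mul (f fu fv : ι → S) (j : ι) (u v : S) (hf : f j = u * v) (hu : fu j = u)
    (hv : fv j = v) (hfu : ∀ i, i ≠ j → fu i = f i) (hfv : ∀ i, i ≠ j → fv i = f i) :
    Module.length S (kH0 N f) ≤ Module.length S (kH0 N fu) + Module.length S (kH0 N fv) := by
  refine (length_le_add (LinearMap.range (kD N f)).mkQ (Submodule.mkQ_surjective _)
    (LinearMap.range (kD N fv)).mkQ
    (LinearMap.range (v • (LinearMap.range (kD N f)).mkQ)) ?_).trans ?_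
  · intro z hz
    simp only [Submodule.mkQ_apply, Submodule.Quotient.mk_eq_zero] at hz
    obtain ⟨n, rfl⟩ := hz
    refine ⟨n j, ?_⟩
    rw [LinearMap.smul_apply, ← map_smul, ← sub_eq_zero, ← map_sub, Submodule.mkQ_apply,
      Submodule.Quotient.mk_eq_zero, kD_apply, ← Finset.add_sum_erase _ _ (Finset.mem_univ j), hv,
      sub_add_cancel_left]
    refine Submodule.neg_mem _ (Submodule.sum_mem _ fun i hi => ?_)
    rw [hfv i (Finset.ne_of_mem_erase hi)]
    exact smul_mem_range_kD f i _
  · gcongr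
    refine length_range_le _ _ ?_
    rintro _ ⟨n, rfl⟩
    rw [LinearMap.smul_apply, ← map_smul, Submodule.mkQ_apply, Submodule.Quotient.mk_eq_zero,
      kD_apply, Finset.smul_sum]
    refine Submodule.sum_mem _ fun i _ => ?_
    by_cases h : i = j
    · subst h
      rw [smul_smul, hu, mul_comm, ← hf]
      exact smul_mem_range_kD f i _
    · rw [smul_comm, hfu i h]
      exact smul_mem_range_kD f i _

/-- multiply all coordinates but `j` by `v` -/
def psi (N : Type*) [AddCommGroup N] [Module S N] (j : ι) (v : S) : (ι → N) →ₗ[S] (ι → N) :=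
  LinearMap.pi fun i => (if i = j then (1 : S) else v) • LinearMap.proj i

lemma psi_apply (j : ι) (v : S) (n : ι → N) (i : ι) :
    psi N j v n i = (if i = j then (1 : S) else v) • n i := rfl

/-- multiply coordinate `j` by `u` -/
def phi (N : Type*) [AddCommGroup N] [Module S N] (j : ι) (v : S) : (ι → N) →ₗ[S] (ι → N) :=
  LinearMap.pi fun i => (if i = j then v else (1 : S)) • LinearMap.proj i

lemma phi_apply (j : ι) (v : S) (n : ι → N) (i : ι) :
    phi N j v n i = (if i = j then v else (1 : S)) • n i := rfl

lemma h1_mul (f fu fv : ι → S) (j : ι) (u v : S) (hf : f j = u * v) (hu : fu j = u)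
    (hv : fv j = v) (hfu : ∀ i, i ≠ j → fu i = f i) (hfv : ∀ i, i ≠ j → fv i = f i) :
    Module.length S (kH1 N f) ≤ Module.length S (kH1 N fu) + Module.length S (kH1 N fv) := by
  have hphi : ∀ z ∈ LinearMap.ker (kD N f), phi N j u z ∈ LinearMap.ker (kD N fv) := by
    intro z hz
    rw [LinearMap.mem_ker, kD_apply] at hz ⊢
    rw [← hz]
    refine Finset.sum_congr rfl fun i _ => ?_
    rw [phi_apply, smul_smul]
    by_cases h : i = j
    · subst h; rw [if_pos rfl, hv, hf, mul_comm]
    · rw [if_neg h, hfv i h, mul_one]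
  have hpsi' : ∀ z, kD N f (psi N j v z) = v • kD N fu z := by
    intro z
    rw [kD_apply, kD_apply, Finset.smul_sum]
    refine Finset.sum_congr rfl fun i _ => ?_
    rw [psi_apply, smul_smul, smul_smul]
    by_cases h : i = j
    · subst h; rw [if_pos rfl, hu, hf, mul_one, mul_comm]
    · rw [if_neg h, hfu i h, mul_comm]
  have hpsi : ∀ z ∈ LinearMap.ker (kD N fu), psi N j v z ∈ LinearMap.ker (kD N f) := by
    intro z hz
    rw [LinearMap.mem_ker, hpsi', hz, smul_zero]
  refine (length_le_add (kB N f).mkQ (Submodule.mkQ_surjective _)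
    ((kB N fv).mkQ.comp ((phi N j u).restrict hphi))
    (LinearMap.range ((kB N f).mkQ.comp ((psi N j v).restrict hpsi))) ?_).trans ?_
  · rintro ⟨z, hz⟩ h
    simp only [LinearMap.comp_apply, Submodule.mkQ_apply, Submodule.Quotient.mk_eq_zero] at h
    obtain ⟨w, hw⟩ := h
    simp only [Submodule.subtype_apply, LinearMap.coe_restrict_apply] at hw
    have hwi : ∀ i, phi N j u z i = ∑ k, fv k • (w i k - w k i) := fun i => by
      rw [← hw, kE_apply]
    have hj := hwi j
    rw [phi_apply, if_pos rfl, ← Finset.add_sum_erase _ _ (Finset.mem_univ j), sub_self,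
      smul_zero, zero_add] at hj
    let x : ι → N := fun i => if i = j then z j else w i j - w j i
    have hx : x ∈ LinearMap.ker (kD N fu) := by
      rw [LinearMap.mem_ker, kD_apply, ← Finset.add_sum_erase _ _ (Finset.mem_univ j)]
      simp only [x, if_pos, hu]
      rw [hj, ← Finset.sum_add_distrib]
      refine Finset.sum_eq_zero fun i hi => ?_
      have hi := Finset.ne_of_mem_erase hi
      rw [if_neg hi, hfv i hi, hfu i hi, ← smul_add]
      simp
    refine ⟨⟨x, hx⟩, ?_⟩
    rw [LinearMap.comp_apply, eq_comm, ← sub_eq_zero, ← map_sub, Submodule.mkQ_apply,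
      Submodule.Quotient.mk_eq_zero]
    refine ⟨fun a b => if a = j ∨ b = j then 0 else w a b, ?_⟩
    ext i
    rw [kE_apply]
    simp only [Submodule.subtype_apply, AddSubgroupClass.coe_sub, LinearMap.coe_restrict_apply,
      Pi.sub_apply, psi_apply, x]
    by_cases h : i = j
    · subst h; simp
    · have hi := hwi i
      rw [phi_apply, if_neg h, one_smul, ← Finset.add_sum_erase _ _ (Finset.mem_univ j), hv] at hi
      rw [if_neg h, if_neg h, hi, add_sub_cancel_left,
        ← Finset.add_sum_erase _ _ (Finset.mem_univ j)]
      simp only [or_true, true_or, if_true, sub_self, smul_zero, zero_add]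
      refine Finset.sum_congr rfl fun k hk => ?_
      have hk := Finset.ne_of_mem_erase hk
      rw [if_neg (by tauto), if_neg (by tauto), hfv k hk]
  · gcongr
    refine length_range_le _ _ ?_
    rintro ⟨z, hz⟩ ⟨w, hw⟩
    rw [LinearMap.comp_apply, Submodule.mkQ_apply, Submodule.Quotient.mk_eq_zero]
    refine ⟨fun a b => if a = j ∨ b = j then w a b else v • w a b, ?_⟩
    simp only [Submodule.subtype_apply, LinearMap.coe_restrict_apply] at hw ⊢
    ext i
    rw [psi_apply, kE_apply, ← hw, kE_apply, Finset.smul_sum]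
    refine Finset.sum_congr rfl fun k _ => ?_
    by_cases h : i = j
    · subst h
      by_cases hk : k = i
      · subst hk; simp
      · simp [hfu k hk]
    · by_cases hk : k = j
      · subst hk
        simp [h, hf, hu, smul_smul, mul_comm]
      · simp [h, hk, hfu k hk, smul_smul, ← smul_sub, mul_comm]

/-- Growth from subadditivity in each variable. -/
lemma growth (h : (ι → S) → ℕ∞)
    (H : ∀ (f fu fv : ι → S) (j : ι) (u v : S), f j = u * v → fu j = u → fv j = v →
      (∀ i, i ≠ j → fu i = f i) → (∀ i, i ≠ j → fv i = f i) → h f ≤ h fu + h fv)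
    (f : ι → S) (q : ℕ) (hq : 0 < q) :
    h (fun i => f i ^ q) ≤ ((q ^ Fintype.card ι : ℕ) : ℕ∞) * h f := by
  have key : ∀ (g : ι → S) (j : ι) (a : S) (q : ℕ),
      h (Function.update g j (a ^ (q + 1))) ≤
        ((q + 1 : ℕ) : ℕ∞) * h (Function.update g j a) := by
    intro g j a q
    induction q with
    | zero => simp
    | succ q ih =>
      refine (H _ (Function.update g j (a ^ (q + 1))) (Function.update g j a) j (a ^ (q + 1)) a
        ?_ ?_ ?_ ?_ ?_).trans ?_
      · simp [pow_succ]
      · simp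
      · simp
      · intro i hi; simp [hi]
      · intro i hi; simp [hi]
      · rw [Nat.cast_succ (q + 1), add_mul, one_mul]
        gcongr
  obtain ⟨q, rfl⟩ := Nat.exists_eq_succ_of_ne_zero hq.ne'
  have : ∀ s : Finset ι, h (fun i => if i ∈ s then f i ^ (q + 1) else f i) ≤
      (((q + 1) ^ s.card : ℕ) : ℕ∞) * h f := by
    intro s
    induction s using Finset.induction_on with
    | empty => simp
    | insert j s hj ih =>
      have e1 : (fun i => if i ∈ insert j s then f i ^ (q + 1) else f i) =
          Function.update (fun i => if i ∈ s then f i ^ (q + 1) else f i) j (f j ^ (q + 1)) := by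
        ext i
        by_cases h : i = j
        · subst h; simp
        · simp [h]
      have e2 : Function.update (fun i => if i ∈ s then f i ^ (q + 1) else f i) j (f j) =
          (fun i => if i ∈ s then f i ^ (q + 1) else f i) := by
        rw [Function.update_eq_self_iff]
        simp [hj]
      rw [e1]
      refine (key _ j (f j) q).trans ?_
      rw [e2, Finset.card_insert_of_notMem hj, pow_succ', Nat.cast_mul, mul_assoc]
      gcongr
  simpa using this Finset.univ

lemma smul_kH0 (f : ι → S) (i : ι) (x : kH0 N f) : f i • x = 0 := by
  obtain ⟨n, rfl⟩ := Submodule.mkQ_surjective _ x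
  rw [← map_smul, Submodule.mkQ_apply, Submodule.Quotient.mk_eq_zero]
  exact smul_mem_range_kD f i n

lemma smul_kH1 (f : ι → S) (i : ι) (x : kH1 N f) : f i • x = 0 := by
  obtain ⟨⟨n, hn⟩, rfl⟩ := Submodule.mkQ_surjective _ x
  rw [← map_smul, Submodule.mkQ_apply, Submodule.Quotient.mk_eq_zero]
  rw [LinearMap.mem_ker, kD_apply] at hn
  refine ⟨fun a b => if b = i then n a else 0, ?_⟩
  ext k
  rw [kE_apply]
  simp only [smul_sub, Finset.sum_sub_distrib, smul_ite, smul_zero, Finset.sum_ite_eq',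
    Finset.mem_univ, if_true]
  by_cases h : k = i
  · simp [h, hn]
  · simp [h]

end koszul

section params

variable {S : Type*} [CommRing S] [IsNoetherianRing S]

lemma length_ne_top_of_smul {M : Type*} [AddCommGroup M] [Module S M] [Module.Finite S M]
    (I : Ideal S) [IsArtinianRing (S ⧸ I)] (h : ∀ a ∈ I, ∀ x : M, a • x = 0) :
    Module.length S M ≠ ⊤ := by
  have ht : Module.IsTorsionBySet S M I := by
    intro x a
    exact h a.1 a.2 x
  let : Module (S ⧸ I) M := ht.module
  have : IsScalarTower S (S ⧸ I) M := ht.isScalarTower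
  have : Module.Finite (S ⧸ I) M := Module.Finite.of_restrictScalars_finite S (S ⧸ I) M
  rw [Module.length_eq_of_surjective (R := S ⧸ I) Ideal.Quotient.mk_surjective]
  exact Module.length_ne_top

variable [IsLocalRing S]

lemma exists_params (A J : Ideal S) (t : ℕ) (ht : IsLocalRing.maximalIdeal S ^ t ≤ J)
    (d : ℕ) (hd : ringKrullDim (S ⧸ A) = d) :
    ∃ y : Fin d → S, (∀ i, y i ∈ J) ∧ IsArtinianRing (S ⧸ (A ⊔ Ideal.span (Set.range y))) := by
  have hnt : Nontrivial (S ⧸ A) := by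
    by_contra hc
    rw [not_nontrivial_iff_subsingleton] at hc
    rw [ringKrullDim_eq_bot_of_subsingleton] at hd
    exact absurd hd (by simp)
  have : IsLocalRing (S ⧸ A) := IsLocalRing.of_surjective' _ Ideal.Quotient.mk_surjective
  have hA : A ≤ IsLocalRing.maximalIdeal S :=
    IsLocalRing.le_maximalIdeal (Ideal.Quotient.nontrivial_iff.mp hnt)
  obtain ⟨s, hs, hc⟩ := Ideal.exists_finset_card_eq_height_of_isNoetherianRing
    (IsLocalRing.maximalIdeal (S ⧸ A))
  have hcard : s.card = d := by
    have := IsLocalRing.maximalIdeal_height_eq_ringKrullDim (R := S ⧸ A)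
    rw [hd, ← hc] at this
    exact_mod_cast this
  let e := s.equivFinOfCardEq hcard
  choose y hy using fun i => Ideal.Quotient.mk_surjective (I := A) (e.symm i).1
  have hym : ∀ i, y i ∈ IsLocalRing.maximalIdeal S := by
    intro i
    have h1 : Ideal.Quotient.mk A (y i) ∈ IsLocalRing.maximalIdeal (S ⧸ A) := by
      rw [hy]
      exact hs.1.2 (Ideal.subset_span (e.symm i).2)
    rw [IsLocalRing.mem_maximalIdeal, mem_nonunits_iff] at h1 ⊢
    exact fun hu => h1 (hu.map _)
  refine ⟨fun i => y i ^ (t + 1), fun i => ?_, ?_⟩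
  · exact ht (Ideal.pow_le_pow_right (Nat.le_succ t) (Ideal.pow_mem_pow (hym i) _))
  · refine IsLocalRing.quotient_artinian_of_mem_minimalPrimes_of_isLocalRing _ ?_
    refine ⟨⟨inferInstance, sup_le hA (Ideal.span_le.mpr ?_)⟩, ?_⟩
    · rintro _ ⟨i, rfl⟩
      exact Ideal.pow_mem_of_mem _ (hym i) _ (Nat.succ_pos t)
    · rintro P ⟨hP, hle⟩ -
      have hAP : A ≤ P := le_sup_left.trans hle
      have hyP : ∀ i, y i ∈ P := fun i => hP.mem_of_pow_mem (t + 1)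
        (hle (Ideal.mem_sup_right (Ideal.subset_span ⟨i, rfl⟩)))
      have := hP
      have hPp : (P.map (Ideal.Quotient.mk A)).IsPrime :=
        Ideal.map_isPrime_of_surjective Ideal.Quotient.mk_surjective (by simpa using hAP)
      have h2 : IsLocalRing.maximalIdeal (S ⧸ A) ≤ P.map (Ideal.Quotient.mk A) := by
        refine hs.2 ⟨hPp, Ideal.span_le.mpr ?_⟩ (IsLocalRing.le_maximalIdeal hPp.ne_top)
        intro x hx
        have := hy (e ⟨x, hx⟩)
        simp only [Equiv.symm_apply_apply] at this
        rw [← this]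
        exact Ideal.mem_map_of_mem _ (hyP _)
      intro x hx
      have h3 : Ideal.Quotient.mk A x ∈ P.map (Ideal.Quotient.mk A) := by
        apply h2
        rw [IsLocalRing.mem_maximalIdeal, mem_nonunits_iff] at hx ⊢
        intro hu
        have : IsLocalHom (Ideal.Quotient.mk A) :=
          IsLocalHom.of_surjective _ Ideal.Quotient.mk_surjective
        exact hx (isUnit_of_map_unit _ _ hu)
      have h4 : x ∈ (P.map (Ideal.Quotient.mk A)).comap (Ideal.Quotient.mk A) := h3
      rwa [Ideal.comap_map_of_surjective _ Ideal.Quotient.mk_surjective, ← RingHom.ker_eq_comap_bot,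
        Ideal.mk_ker, sup_eq_left.mpr hAP] at h4

end params

section bracket

variable {S : Type*} [CommRing S]

lemma bracketPow_span (p : ℕ) (hp : p.Prime) [CharP S p] {κ : Type*} [Fintype κ] (x : κ → S)
    (n : ℕ) : bracketPow (Ideal.span (Set.range x)) (p ^ n) =
      Ideal.span (Set.range fun j => x j ^ p ^ n) := by
  have : Fact p.Prime := ⟨hp⟩
  apply le_antisymm
  · refine Ideal.span_le.mpr ?_
    rintro _ ⟨a, ha, rfl⟩
    obtain ⟨c, rfl⟩ := (Submodule.mem_span_range_iff_exists_fun S).mp ha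
    simp only [SetLike.mem_coe, smul_eq_mul]
    rw [sum_pow_char_pow p]
    refine Ideal.sum_mem _ fun j _ => ?_
    rw [mul_pow]
    exact Ideal.mul_mem_left _ _ (Ideal.subset_span ⟨j, rfl⟩)
  · refine Ideal.span_le.mpr ?_
    rintro _ ⟨j, rfl⟩
    exact Ideal.subset_span ⟨x j, Ideal.subset_span ⟨j, rfl⟩, rfl⟩

end bracket

section tensor

open TensorProduct

variable {S : Type*} [CommRing S] {N : Type*} [AddCommGroup N] [Module S N]
variable {ι κ : Type*} [Fintype ι] [Fintype κ]

/-- `n ↦ ∑ nᵢ ⊗ fᵢ`. -/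
def tF (N : Type*) [AddCommGroup N] [Module S N] (I : Ideal S) (f : ι → I) :
    (ι → N) →ₗ[S] N ⊗[S] I :=
  ∑ i, (TensorProduct.mk S N I).flip (f i) ∘ₗ LinearMap.proj i

lemma tF_apply (I : Ideal S) (f : ι → I) (n : ι → N) : tF N I f n = ∑ i, n i ⊗ₜ[S] f i := by
  simp [tF]

lemma lTensor_tF (I : Ideal S) (f : ι → I) (n : ι → N) :
    TensorProduct.rid S N (LinearMap.lTensor N I.subtype (tF N I f n)) =
      kD N (fun i => (f i : S)) n := by
  simp [tF_apply]

lemma tF_surj (I : Ideal S) (g : κ → I) (hg : I ≤ Ideal.span (Set.range fun j => (g j : S))) :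
    Function.Surjective (tF N I g) := by
  intro x
  induction x with
  | zero => exact ⟨0, map_zero _⟩
  | add a b ha hb =>
    obtain ⟨a, rfl⟩ := ha
    obtain ⟨b, rfl⟩ := hb
    exact ⟨a + b, map_add _ _ _⟩
  | tmul n r =>
    obtain ⟨c, hc⟩ := (Submodule.mem_span_range_iff_exists_fun S).mp (hg r.2)
    refine ⟨fun j => c j • n, ?_⟩
    have : r = ∑ j, c j • g j := by
      ext
      simp [← hc]
    rw [tF_apply, this, TensorProduct.tmul_sum]
    simp only [TensorProduct.smul_tmul]

variable [DecidableEq ι]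

lemma length_T_le (I : Ideal S) (f : ι → I) (g : κ → I)
    (hg : I ≤ Ideal.span (Set.range fun j => (g j : S))) :
    Module.length S (LinearMap.ker (LinearMap.lTensor N I.subtype)) ≤
      Module.length S (kH1 N fun i => (f i : S)) +
        (Fintype.card κ : ℕ∞) * Module.length S (kH0 N fun i => (f i : S)) := by
  set L := LinearMap.lTensor N I.subtype with hL
  set f' : ι → S := fun i => (f i : S) with hf'
  let α₀ : (ι → N) × (κ → N) →ₗ[S] N ⊗[S] I := (tF N I f).coprod (tF N I g)
  have hα₀ : ∀ z ∈ LinearMap.ker (L ∘ₗ α₀), α₀ z ∈ LinearMap.ker L := fun z hz => hz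
  have hker : ∀ n, tF N I f n ∈ LinearMap.ker L ↔ n ∈ LinearMap.ker (kD N f') := by
    intro n
    rw [LinearMap.mem_ker, LinearMap.mem_ker, ← lTensor_tF, LinearEquiv.map_eq_zero_iff]
  let γ : LinearMap.ker (kD N f') →ₗ[S] LinearMap.ker L :=
    (tF N I f).restrict fun n hn => (hker n).mpr hn
  let β₀ : (ι → N) × (κ → N) →ₗ[S] (κ → kH0 N f') :=
    (LinearMap.pi fun j => (LinearMap.range (kD N f')).mkQ ∘ₗ LinearMap.proj j) ∘ₗ
      LinearMap.snd S _ _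
  refine (length_le_add (α₀.restrict hα₀) ?_ (β₀ ∘ₗ (LinearMap.ker (L ∘ₗ α₀)).subtype)
    (LinearMap.range γ) ?_).trans ?_
  · rintro ⟨x, hx⟩
    obtain ⟨m, rfl⟩ := tF_surj I g hg x
    refine ⟨⟨(0, m), ?_⟩, ?_⟩
    · rw [LinearMap.mem_ker] at hx
      simp [α₀, hx]
    · ext
      simp [α₀]
  · rintro ⟨⟨n, m⟩, hz⟩ h
    have hm : ∀ j, ∃ v : ι → N, kD N f' v = m j := by
      intro j
      have h' : (LinearMap.range (kD N f')).mkQ (m j) = 0 := congrFun h j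
      rw [Submodule.mkQ_apply, Submodule.Quotient.mk_eq_zero] at h'
      exact h'
    choose v hv using hm
    have key : tF N I f (fun i => n i + ∑ j, (g j : S) • v j i) = α₀ (n, m) := by
      simp only [α₀, LinearMap.coprod_apply, tF_apply, TensorProduct.add_tmul,
        Finset.sum_add_distrib, TensorProduct.sum_tmul, ← hv, kD_apply]
      congr 1
      rw [Finset.sum_comm]
      refine Finset.sum_congr rfl fun j _ => Finset.sum_congr rfl fun i _ => ?_
      rw [TensorProduct.smul_tmul, TensorProduct.smul_tmul]
      congr 1
      ext
      simp [f', mul_comm]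
    refine ⟨⟨fun i => n i + ∑ j, (g j : S) • v j i, (hker _).mp ?_⟩, ?_⟩
    · rw [key]; exact hz
    · ext
      exact key
  · refine add_le_add (length_range_le _ _ ?_) ?_
    · rintro ⟨_, hz⟩ ⟨w, rfl⟩
      ext
      simp only [γ, Submodule.subtype_apply, LinearMap.coe_restrict_apply, tF_apply, kE_apply,
        TensorProduct.sum_tmul, TensorProduct.smul_tmul, TensorProduct.sub_tmul,
        Finset.sum_sub_distrib, ZeroMemClass.coe_zero]
      rw [sub_eq_zero]
      conv_rhs => rw [Finset.sum_comm]
      refine Finset.sum_congr rfl fun j _ => Finset.sum_congr rfl fun i _ => ?_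
      congr 1
      ext
      simp [f', mul_comm]
    · rw [Module.length_pi_of_fintype]
      simp

/-- Comparison of a presentation of `S ⧸ I` through projectives with `I` itself. -/
lemma length_H1_le {P₂ P₁ P₀ : Type*} [AddCommGroup P₂] [AddCommGroup P₁] [AddCommGroup P₀]
    [Module S P₂] [Module S P₁] [Module S P₀] [Module.Projective S P₀]
    (I : Ideal S) (d₂ : P₂ →ₗ[S] P₁) (d₁ : P₁ →ₗ[S] P₀) (π : P₀ →ₗ[S] S ⧸ I)
    (h₂ : Function.Exact d₂ d₁) (h₁ : Function.Exact d₁ π) (h₀ : Function.Surjective π)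
    (B : Submodule S (LinearMap.ker (d₁.lTensor N)))
    (hB : ∀ x : LinearMap.ker (d₁.lTensor N), (x : N ⊗[S] P₁) ∈ LinearMap.range (d₂.lTensor N) → x ∈ B) :
    Module.length S (LinearMap.ker (d₁.lTensor N) ⧸ B) ≤
      Module.length S (LinearMap.ker (LinearMap.lTensor N I.subtype)) := by
  obtain ⟨b, hb⟩ := Module.projective_lifting_property I.mkQ π I.mkQ_surjective
  obtain ⟨a, ha⟩ := Module.projective_lifting_property π I.mkQ h₀
  have hb' : ∀ x, Submodule.Quotient.mk (b x) = π x := fun x => LinearMap.congr_fun hb x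
  have ha' : ∀ s, π (a s) = Submodule.Quotient.mk s := fun x => LinearMap.congr_fun ha x
  let Z := LinearMap.ker π
  let d₁' : P₁ →ₗ[S] Z := d₁.codRestrict Z fun x => h₁.apply_apply_eq_zero x
  let c : P₁ →ₗ[S] I := (b ∘ₗ d₁).codRestrict I fun x => by
    rw [← Submodule.Quotient.mk_eq_zero, LinearMap.comp_apply, hb', h₁.apply_apply_eq_zero]
  let aZ : I →ₗ[S] Z := (a ∘ₗ I.subtype).codRestrict Z fun x => by
    rw [LinearMap.mem_ker, LinearMap.comp_apply, ha', Submodule.Quotient.mk_eq_zero]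
    exact x.2
  let h : P₀ →ₗ[S] Z := (a ∘ₗ b - LinearMap.id).codRestrict Z fun x => by
    rw [LinearMap.mem_ker, LinearMap.sub_apply, map_sub, LinearMap.comp_apply, ha', hb']
    simp
  have e1 : aZ ∘ₗ c = d₁' + h ∘ₗ d₁ := by
    ext x
    change a (b (d₁ x)) = d₁ x + (a (b (d₁ x)) - d₁ x)
    abel
  have e2 : I.subtype ∘ₗ c = b ∘ₗ d₁ := rfl
  have hex : Function.Exact d₂ d₁' := by
    intro x
    rw [← h₂ x]
    exact Subtype.ext_iff
  have hsurj : Function.Surjective d₁' := by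
    rintro ⟨z, hz⟩
    obtain ⟨x, hx⟩ := (h₁ z).mp hz
    exact ⟨x, Subtype.ext hx⟩
  have hc : ∀ x ∈ LinearMap.ker (d₁.lTensor N),
      c.lTensor N x ∈ LinearMap.ker (LinearMap.lTensor N I.subtype) := by
    intro x hx
    rw [LinearMap.mem_ker] at hx ⊢
    rw [← LinearMap.lTensor_comp_apply, e2, LinearMap.lTensor_comp_apply, hx, map_zero]
  refine length_quot_le_of_map ((c.lTensor N).restrict hc) B ?_
  rintro ⟨x, hx⟩ h0
  apply hB
  have h0' : c.lTensor N x = 0 := congrArg Subtype.val h0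
  rw [LinearMap.mem_ker] at hx
  have h3 : d₁'.lTensor N x = 0 := by
    have : (aZ ∘ₗ c).lTensor N x = 0 := by
      rw [LinearMap.lTensor_comp_apply, h0', map_zero]
    rw [e1, LinearMap.lTensor_add, LinearMap.add_apply, LinearMap.lTensor_comp_apply, hx,
      map_zero, add_zero] at this
    exact this
  exact (lTensor_exact N hex hsurj x).mp h3

end tensor

section tor

open TensorProduct

lemma length_tor_le (S : Type) [CommRing S] (N : Type) [AddCommGroup N] [Module S N]
    (I : Ideal S) :
    Module.length S (((Tor (ModuleCat S) 1).obj (ModuleCat.of S N)).obj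
            (ModuleCat.of S (S ⧸ I))) ≤
      Module.length S (LinearMap.ker (LinearMap.lTensor N I.subtype)) := by
  let P := ProjectiveResolution.of (ModuleCat.of S (S ⧸ I))
  let F := (MonoidalCategory.tensoringLeft (ModuleCat S)).obj (ModuleCat.of S N)
  let K := (F.mapHomologicalComplex (ComplexShape.down ℕ)).obj P.complex
  have e1 := (P.isoLeftDerivedObj F 1).toLinearEquiv
  have e2 : K.homology 1 ≅ (K.sc' 2 1 0).homology :=
    ShortComplex.homologyMapIso (K.isoSc' 2 1 0 (by simp) (by simp))
  have e3 := (e2 ≪≫ (K.sc' 2 1 0).moduleCatHomologyIso).toLinearEquiv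
  refine (e1.trans e3).length_eq.trans_le ?_
  have : Module.Projective S (P.complex.X 0) := by
    exact (IsProjective.iff_projective (P.complex.X 0)).mpr (P.projective 0)
  have h2 := (ShortComplex.ShortExact.moduleCat_exact_iff_function_exact _).mp (P.exact_succ 0)
  have h1 := (ShortComplex.ShortExact.moduleCat_exact_iff_function_exact _).mp P.exact₀
  have h0 : Function.Surjective (P.π.f 0) := (ModuleCat.epi_iff_surjective _).mp inferInstance
  exact length_H1_le I (P.complex.d 2 1).hom (P.complex.d 1 0).hom (P.π.f 0).hom h2 h1 h0 _ (by
    rintro ⟨x, hx⟩ ⟨z, hz⟩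
    exact ⟨z, Subtype.ext hz⟩)

end tor

end FrobGrowth

/-- **Growth bounds for Frobenius powers.**  If `(S,m)` is a Noetherian local ring of
characteristic `p > 0`, `J` is `m`-primary and `N` is finitely generated, then
`λ_S(N/J^{[p^n]}N)` and `λ_S(Tor₁^S(N, S/J^{[p^n]}))` are both `O((p^n)^{dim N})`. -/
theorem length_frobenius_powers_growth
    (S : Type) [CommRing S] [IsNoetherianRing S] [IsLocalRing S]
    (p : ℕ) (hp : p.Prime) [CharP S p]
    (J : Ideal S) (hJ : IsFiniteLength S (S ⧸ J))
    (N : Type) [AddCommGroup N] [Module S N] [Module.Finite S N]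
    (dN : ℕ) (hdN : ringKrullDim (S ⧸ Module.annihilator S N) = dN) :
    ∃ C₁ C₂ : ℕ, 0 < C₁ ∧ 0 < C₂ ∧ ∀ n : ℕ,
      moduleLength S (N ⧸ (bracketPow J (p ^ n) • ⊤ : Submodule S N)) ≤
        ((C₁ * (p ^ n) ^ dN : ℕ) : WithBot ℕ∞) ∧
      moduleLength S
          (((Tor (ModuleCat S) 1).obj (ModuleCat.of S N)).obj
            (ModuleCat.of S (S ⧸ bracketPow J (p ^ n)))) ≤
        ((C₂ * (p ^ n) ^ dN : ℕ) : WithBot ℕ∞) := by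
  open FrobGrowth in
  have hart : IsArtinianRing (S ⧸ J) := by
    have := (isFiniteLength_iff_isNoetherian_isArtinian.mp hJ).2
    exact isArtinian_of_tower S this
  obtain ⟨t, ht⟩ : ∃ t, IsLocalRing.maximalIdeal S ^ t ≤ J :=
    IsLocalRing.exists_maximalIdeal_pow_le_of_isArtinianRing_quotient J
  obtain ⟨y, hyJ, hyA⟩ := exists_params (Module.annihilator S N) J t ht dN hdN
  obtain ⟨k, x, hx⟩ := Submodule.fg_iff_exists_fin_generating_family.mp (IsNoetherian.noetherian J)
  have hfin : ∀ (M : Type) [AddCommGroup M] [Module S M] [Module.Finite S M],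
      (∀ a ∈ Module.annihilator S N, ∀ z : M, a • z = 0) → (∀ i, ∀ z : M, y i • z = 0) →
      Module.length S M ≠ ⊤ := by
    intro M _ _ _ h1 h2
    refine length_ne_top_of_smul (Module.annihilator S N ⊔ Ideal.span (Set.range y)) ?_
    have : Module.annihilator S N ⊔ Ideal.span (Set.range y) ≤ Module.annihilator S M := by
      refine sup_le (fun a ha => Module.mem_annihilator.mpr (h1 a ha)) (Ideal.span_le.mpr ?_)
      rintro _ ⟨i, rfl⟩
      exact Module.mem_annihilator.mpr (h2 i)
    exact fun a ha => Module.mem_annihilator.mp (this ha)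
  have hf0 : Module.length S (kH0 N y) ≠ ⊤ := by
    refine hfin _ ?_ (smul_kH0 y)
    intro a ha z
    obtain ⟨z, rfl⟩ := Submodule.mkQ_surjective _ z
    rw [← map_smul, Module.mem_annihilator.mp ha, map_zero]
  have hf1 : Module.length S (kH1 N y) ≠ ⊤ := by
    refine hfin _ ?_ (smul_kH1 y)
    intro a ha z
    obtain ⟨z, rfl⟩ := Submodule.mkQ_surjective _ z
    have : a • z = 0 := by
      ext i
      exact Module.mem_annihilator.mp ha _
    rw [← map_smul, this, map_zero]
  obtain ⟨c0, hc0⟩ := ENat.ne_top_iff_exists.mp hf0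
  obtain ⟨c1, hc1⟩ := ENat.ne_top_iff_exists.mp hf1
  refine ⟨c0 + 1, c1 + k * c0 + 1, Nat.succ_pos _, Nat.succ_pos _, fun n => ?_⟩
  have hq : 0 < p ^ n := pow_pos hp.pos n
  have g0 := growth (fun f : Fin dN → S => Module.length S (kH0 N f)) h0_mul y (p ^ n) hq
  have g1 := growth (fun f : Fin dN → S => Module.length S (kH1 N f)) h1_mul y (p ^ n) hq
  simp only [Fintype.card_fin, ← hc0, ← hc1] at g0 g1
  have hyI : ∀ i, y i ^ p ^ n ∈ bracketPow J (p ^ n) := fun i =>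
    Ideal.subset_span ⟨y i, hyJ i, rfl⟩
  have hspan : bracketPow J (p ^ n) = Ideal.span (Set.range fun j => x j ^ p ^ n) := by
    rw [← hx]
    exact bracketPow_span p hp x n
  constructor
  · rw [moduleLength, ← Module.coe_length]
    have : Module.length S (N ⧸ (bracketPow J (p ^ n) • ⊤ : Submodule S N)) ≤
        Module.length S (kH0 N fun i => y i ^ p ^ n) := by
      refine Module.length_le_of_surjective (Submodule.factor ?_) (Submodule.factor_surjective _)
      rintro _ ⟨m, rfl⟩
      rw [kD_apply]
      exact Submodule.sum_mem _ fun i _ => Submodule.smul_mem_smul (hyI i) trivial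
    have h3 := this.trans g0
    have h4 : (((p ^ n) ^ dN : ℕ) : ℕ∞) * (c0 : ℕ∞) ≤ (((c0 + 1) * (p ^ n) ^ dN : ℕ) : ℕ∞) := by
      norm_cast
      nlinarith [Nat.zero_le ((p ^ n) ^ dN)]
    exact WithBot.coe_le_coe.mpr (h3.trans h4)
  · rw [moduleLength, ← Module.coe_length]
    have hxI : ∀ j, x j ^ p ^ n ∈ bracketPow J (p ^ n) := fun j => by
      rw [hspan]
      exact Ideal.subset_span ⟨j, rfl⟩
    have h2 := length_T_le (N := N) (bracketPow J (p ^ n)) (fun i => ⟨y i ^ p ^ n, hyI i⟩)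
      (fun j => ⟨x j ^ p ^ n, hxI j⟩) hspan.le
    have h3 := (length_tor_le S N (bracketPow J (p ^ n))).trans h2
    simp only [Fintype.card_fin] at h3
    have h4 : (((p ^ n) ^ dN : ℕ) : ℕ∞) * (c1 : ℕ∞) +
        (k : ℕ∞) * ((((p ^ n) ^ dN : ℕ) : ℕ∞) * (c0 : ℕ∞)) ≤
        (((c1 + k * c0 + 1) * (p ^ n) ^ dN : ℕ) : ℕ∞) := by
      norm_cast
      nlinarith [Nat.zero_le ((p ^ n) ^ dN)]
    refine WithBot.coe_le_coe.mpr (h3.trans (le_trans ?_ h4))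
    gcongr

end
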